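/- Let (G,C) be a strongly connected inhomogeneous Mauldin–Williams graph in ℝ^d satisfying the SOSC with ∫₀^∞ e^{−s₀t} N_{e^{−t}}(C_i) dt < ∞ for all i ∈ V, where s₀ = s₀(G). With f_j^*(t) = e^{−s₀t}N_{e^{−t}}(K_j^C) and L_i^*(t) = Σ_{e∈E_i} N_{e^{−t}}(S_e(K_{t(e)}^C)) − N_{e^{−t}}(K_i^C), define f_i(t) = f_i^*(t) for t ≥ 0 and f_i(t) = 0 for t < 0, and L_i(t) = −L_i^*(t)e^{−s₀t} + Σ_{j∈V} Σ_{e∈E_{ij}, t < log(1/r_e)} r_e^{s₀} f_j^*(t + log r_e) for t ≥ 0 and L_i(t) = 0 for t < 0. Then: (a) f_i(t) = Σ_{j∈V} Σ_{e∈E_{ij}} r_e^{s₀} f_j(t + log r_e) + L_i(t) for all i ∈ V and t ∈ ℝ; and (b) each L_i is directly Riemann integrable, i.e., Riemann integrable on finite closed intervals with Σ_{k=0}^∞ sup_{t∈[k,k+1]} |L_i(t)| < ∞. -/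

import Mathlib

open Set Filter Topology MeasureTheory Metric

noncomputable section

/-- Points of `ℝ^d`. -/
abbrev Pt (d : ℕ) := EuclideanSpace ℝ (Fin d)

/-- The `r`-covering number of `A ⊆ ℝ^d`: the least number of closed balls of
radius `r` needed to cover `A`. -/
noncomputable def coveringNumber {d : ℕ} (A : Set (Pt d)) (r : ℝ) : ℕ :=
  sInf {k : ℕ | ∃ c : Fin k → Pt d, A ⊆ ⋃ i, Metric.closedBall (c i) r}

/-- A Mauldin–Williams graph in `ℝ^d` over a finite directed multigraph with
vertex type `V` and edge type `E`: each vertex `i` carries a non-empty compact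
set `X i` equal to the closure of its interior, and each edge `e` carries a
contractive similarity `S e` of ratio `r e ∈ (0,1)` mapping `X (term e)` into
`X (init e)`. -/
structure MWGraph (d : ℕ) (V E : Type) [Fintype V] [Fintype E] where
  init : E → V
  term : E → V
  X : V → Set (Pt d)
  S : E → Pt d → Pt d
  r : E → ℝ
  X_nonempty : ∀ i, (X i).Nonempty
  X_compact : ∀ i, IsCompact (X i)
  X_regular : ∀ i, closure (interior (X i)) = X i
  r_pos : ∀ e, 0 < r e
  r_lt_one : ∀ e, r e < 1
  S_maps : ∀ e, Set.MapsTo (S e) (X (term e)) (X (init e))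
  S_sim : ∀ e x y, dist (S e x) (S e y) = r e * dist x y

namespace MWGraph

variable {d : ℕ} {V E : Type} [Fintype V] [Fintype E]

variable (G : MWGraph d V E)

/-- `G.IsPathFrom j γ` holds iff the list of edges `γ` is a directed path
starting at vertex `j`. -/
def IsPathFrom : V → List E → Prop
  | _, [] => True
  | j, e :: es => G.init e = j ∧ IsPathFrom (G.term e) es

/-- Terminal vertex of the path `γ` starting at `j`. -/
def pathTerm : V → List E → V
  | j, [] => j
  | _, e :: es => pathTerm (G.term e) es

/-- `S_γ = S_{e₁} ∘ ⋯ ∘ S_{eₙ}` (with `S_∅ = id`). -/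
def pathMap : List E → Pt d → Pt d
  | [] => id
  | e :: es => G.S e ∘ pathMap es

/-- `r_γ = r_{e₁} ⋯ r_{eₙ}` (with `r_∅ = 1`). -/
def pathRatio (γ : List E) : ℝ := (γ.map G.r).prod

/-- The underlying multigraph is strongly connected: for every ordered pair of
vertices there is a (non-empty) directed path from the first to the second. -/
def StronglyConnected : Prop :=
  ∀ i j : V, ∃ γ : List E, γ ≠ [] ∧ G.IsPathFrom i γ ∧ G.pathTerm i γ = j

/-- `K` is the list of graph-directed self-similar sets of `G`: the unique list
of non-empty compact sets with `K i = ⋃_{e ∈ E_i} S_e (K (term e))`. -/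
def IsAttractor (K : V → Set (Pt d)) : Prop :=
  (∀ i, IsCompact (K i)) ∧ (∀ i, (K i).Nonempty) ∧
    ∀ i, K i = ⋃ e ∈ {e : E | G.init e = i}, G.S e '' K (G.term e)

/-- `C` is an admissible list of condensation sets: compact subsets of the `X i`. -/
def IsCondensation (C : V → Set (Pt d)) : Prop :=
  ∀ i, IsCompact (C i) ∧ C i ⊆ G.X i

/-- `K` is the list of inhomogeneous graph-directed self-similar sets of `(G, C)`:
the unique list of non-empty compact sets with
`K i = ⋃_{e ∈ E_i} S_e (K (term e)) ∪ C i`. -/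
def IsInhomAttractor (C : V → Set (Pt d)) (K : V → Set (Pt d)) : Prop :=
  (∀ i, IsCompact (K i)) ∧ (∀ i, (K i).Nonempty) ∧
    ∀ i, K i = (⋃ e ∈ {e : E | G.init e = i}, G.S e '' K (G.term e)) ∪ C i

/-- `G` satisfies the open set condition with the open sets `U`. -/
def IsOSCWith (U : V → Set (Pt d)) : Prop :=
  (∀ i, (U i).Nonempty) ∧ (∀ i, IsOpen (U i)) ∧ (∀ i, Bornology.IsBounded (U i)) ∧
    (∀ i, U i ⊆ G.X i) ∧
    (∀ i, (⋃ e ∈ {e : E | G.init e = i}, G.S e '' U (G.term e)) ⊆ U i) ∧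
    ∀ e e' : E, G.init e = G.init e' → e ≠ e' →
      Disjoint (G.S e '' U (G.term e)) (G.S e' '' U (G.term e'))

/-- The set `{-log r_γ : γ a directed cycle of G}`. -/
def cycleSet : Set ℝ :=
  {x : ℝ | ∃ (j : V) (γ : List E), γ ≠ [] ∧ G.IsPathFrom j γ ∧ G.pathTerm j γ = j ∧
    x = -Real.log (G.pathRatio γ)}

/-- `G_M`, the smallest closed additive subgroup of `ℝ` containing
`{-log r_γ : γ a directed cycle}`. -/
def GM : Set ℝ := closure ((AddSubgroup.closure (G.cycleSet) : AddSubgroup ℝ) : Set ℝ)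

variable [DecidableEq V]

/-- The matrix `A_G^s` with entries `(A_G^s)_{ij} = Σ_{e ∈ E_{ij}} r_e^s`. -/
def Amatrix (s : ℝ) : Matrix V V ℝ :=
  Matrix.of fun i j => ∑ e : E, if G.init e = i ∧ G.term e = j then G.r e ^ s else 0

end MWGraph

/-- Spectral radius of a real square matrix: the largest modulus of a complex
eigenvalue. -/
noncomputable def matrixSpectralRadius {n : Type} [Fintype n] [DecidableEq n]
    (A : Matrix n n ℝ) : ℝ :=
  sSup {x : ℝ | ∃ μ : ℂ, μ ∈ spectrum ℂ (A.map (fun a : ℝ => (a : ℂ))) ∧ x = ‖μ‖}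

/-- `s` is the (unique) exponent `s ≥ 0` with `ρ(A_G^s) = 1`, i.e. `s = s₀(G)`. -/
def IsS0 {d : ℕ} {V E : Type} [Fintype V] [Fintype E] [DecidableEq V]
    (G : MWGraph d V E) (s : ℝ) : Prop :=
  0 ≤ s ∧ matrixSpectralRadius (G.Amatrix s) = 1

section Covering

variable {d : ℕ} {A B : Set (Pt d)} {r r' : ℝ}

lemma coveringNumber_le_card (s : Finset (Pt d)) (h : A ⊆ ⋃ c ∈ s, closedBall c r) :
    coveringNumber A r ≤ s.card := by
  refine Nat.sInf_le ⟨fun i => (s.equivFin.symm i : Pt d), fun x hx => ?_⟩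
  obtain ⟨c, hc, hxc⟩ := mem_iUnion₂.1 (h hx)
  exact mem_iUnion.2 ⟨s.equivFin ⟨c, hc⟩, by simpa using hxc⟩

lemma exists_cover_card_le (hA : Bornology.IsBounded A) (hr : 0 < r) :
    ∃ s : Finset (Pt d), s.card ≤ coveringNumber A r ∧ A ⊆ ⋃ c ∈ s, closedBall c r := by
  classical
  have hne : {k : ℕ | ∃ c : Fin k → Pt d, A ⊆ ⋃ i, closedBall (c i) r}.Nonempty := by
    have htb : TotallyBounded A := hA.isCompact_closure.totallyBounded.subset subset_closure
    obtain ⟨t, -, htf, ht⟩ := Metric.finite_approx_of_totallyBounded htb r hr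
    refine ⟨_, fun i => (htf.toFinset.equivFin.symm i : Pt d), fun x hx => ?_⟩
    obtain ⟨c, hc, hxc⟩ := mem_iUnion₂.1 (ht hx)
    exact mem_iUnion.2 ⟨htf.toFinset.equivFin ⟨c, htf.mem_toFinset.2 hc⟩,
      by simpa using (mem_ball.1 hxc).le⟩
  obtain ⟨c, hc⟩ := Nat.sInf_mem hne
  refine ⟨Finset.univ.image c, Finset.card_image_le.trans (by simp [_root_.coveringNumber]),
    fun x hx => ?_⟩
  obtain ⟨i, hi⟩ := mem_iUnion.1 (hc hx)
  exact mem_iUnion₂.2 ⟨c i, by simp, hi⟩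

lemma coveringNumber_empty (r : ℝ) : coveringNumber (∅ : Set (Pt d)) r = 0 :=
  Nat.le_zero.1 (coveringNumber_le_card ∅ (empty_subset _))

lemma coveringNumber_mono (hB : Bornology.IsBounded B) (hAB : A ⊆ B) (hr : 0 < r)
    (hrr : r ≤ r') : coveringNumber A r' ≤ coveringNumber B r := by
  obtain ⟨s, hs, hc⟩ := exists_cover_card_le hB hr
  exact (coveringNumber_le_card s ((hAB.trans hc).trans
    (iUnion₂_mono fun c _ => closedBall_subset_closedBall hrr))).trans hs

lemma coveringNumber_union_le (hA : Bornology.IsBounded A) (hB : Bornology.IsBounded B)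
    (hr : 0 < r) : coveringNumber (A ∪ B) r ≤ coveringNumber A r + coveringNumber B r := by
  classical
  obtain ⟨s, hs, hsc⟩ := exists_cover_card_le hA hr
  obtain ⟨t, ht, htc⟩ := exists_cover_card_le hB hr
  refine (coveringNumber_le_card (s ∪ t) ?_).trans
    ((Finset.card_union_le s t).trans (add_le_add hs ht))
  rintro x (hx | hx)
  · obtain ⟨c, hc, h⟩ := mem_iUnion₂.1 (hsc hx)
    exact mem_iUnion₂.2 ⟨c, Finset.mem_union_left _ hc, h⟩
  · obtain ⟨c, hc, h⟩ := mem_iUnion₂.1 (htc hx)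
    exact mem_iUnion₂.2 ⟨c, Finset.mem_union_right _ hc, h⟩

lemma coveringNumber_biUnion_le {ι : Type*} (F : Finset ι) (A : ι → Set (Pt d))
    (hA : ∀ e ∈ F, Bornology.IsBounded (A e)) (hr : 0 < r) :
    coveringNumber (⋃ e ∈ F, A e) r ≤ ∑ e ∈ F, coveringNumber (A e) r := by
  classical
  induction F using Finset.induction_on with
  | empty => simp [coveringNumber_empty]
  | insert a F ha ih =>
    rw [Finset.sum_insert ha, Finset.set_biUnion_insert]
    refine (coveringNumber_union_le (hA a (by simp)) ?_ hr).trans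
      (Nat.add_le_add_left (ih fun e he => hA e (Finset.mem_insert_of_mem he)) _)
    exact (Bornology.isBounded_biUnion_finset F).2 fun e he => hA e (Finset.mem_insert_of_mem he)

/-- If every ball meeting two of the sets `A e` meets `K` only inside `D`, then the covering numbers
of the `A e` add up to at most that of `K`, up to a multiple of that of `D`. -/
lemma sum_coveringNumber_le {ι : Type*} (F : Finset ι) (A : ι → Set (Pt d)) {K D : Set (Pt d)}
    (hK : Bornology.IsBounded K) (hD : Bornology.IsBounded D) (hr : 0 < r)
    (hAK : ∀ e ∈ F, A e ⊆ K)
    (hAD : ∀ c, ∀ e ∈ F, ∀ e' ∈ F, e ≠ e' → (A e ∩ closedBall c r).Nonempty →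
      (A e' ∩ closedBall c r).Nonempty → K ∩ closedBall c r ⊆ D) :
    ∑ e ∈ F, coveringNumber (A e) r ≤ coveringNumber K r + F.card * coveringNumber D r := by
  classical
  obtain ⟨s, hs, hsc⟩ := exists_cover_card_le hK hr
  obtain ⟨s', hs', hsc'⟩ := exists_cover_card_le hD hr
  let good : Pt d → Finset ι := fun c => F.filter fun e => (A e ∩ closedBall c r).Nonempty
  let bad : Finset (Pt d) := s.filter fun c => 1 < (good c).card
  have hbad : bad.card ≤ coveringNumber D r := by
    have h1 : coveringNumber K r ≤ ((s \ bad) ∪ s').card := by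
      refine coveringNumber_le_card _ fun x hx => ?_
      obtain ⟨c, hc, hxc⟩ := mem_iUnion₂.1 (hsc hx)
      by_cases hcb : c ∈ bad
      · obtain ⟨e, he, e', he', hne⟩ := Finset.one_lt_card.1 (Finset.mem_filter.1 hcb).2
        have hxD : x ∈ D := hAD c e (Finset.mem_filter.1 he).1 e' (Finset.mem_filter.1 he').1 hne
          (Finset.mem_filter.1 he).2 (Finset.mem_filter.1 he').2 ⟨hx, hxc⟩
        obtain ⟨c', hc', hxc'⟩ := mem_iUnion₂.1 (hsc' hxD)
        exact mem_iUnion₂.2 ⟨c', Finset.mem_union_right _ hc', hxc'⟩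
      · exact mem_iUnion₂.2 ⟨c, Finset.mem_union_left _ (Finset.mem_sdiff.2 ⟨hc, hcb⟩), hxc⟩
    have h2 := Finset.card_union_le (s \ bad) s'
    have h3 : (s \ bad).card + bad.card = s.card :=
      Finset.card_sdiff_add_card_eq_card (Finset.filter_subset _ s)
    omega
  have hcov : ∀ e ∈ F, coveringNumber (A e) r ≤
      ∑ c ∈ s, if (A e ∩ closedBall c r).Nonempty then 1 else 0 := by
    intro e he
    rw [← Finset.card_filter]
    refine coveringNumber_le_card _ fun x hx => ?_
    obtain ⟨c, hc, hxc⟩ := mem_iUnion₂.1 (hsc (hAK e he hx))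
    exact mem_iUnion₂.2 ⟨c, Finset.mem_filter.2 ⟨hc, x, hx, hxc⟩, hxc⟩
  calc ∑ e ∈ F, coveringNumber (A e) r
      ≤ ∑ c ∈ s, (good c).card := by
        refine (Finset.sum_le_sum hcov).trans ?_
        rw [Finset.sum_comm]
        exact Finset.sum_le_sum fun c _ => by rw [← Finset.card_filter]
    _ ≤ ∑ c ∈ s, (1 + if 1 < (good c).card then F.card else 0) := by
        refine Finset.sum_le_sum fun c _ => ?_
        have : (good c).card ≤ F.card := Finset.card_filter_le _ _
        split_ifs <;> omega
    _ = s.card + bad.card * F.card := by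
        rw [Finset.sum_add_distrib, ← Finset.sum_filter]
        simp [bad]
    _ ≤ coveringNumber K r + F.card * coveringNumber D r := by
        rw [mul_comm]
        exact add_le_add hs (Nat.mul_le_mul_left _ hbad)

lemma monotone_coveringNumber_exp_neg (hA : Bornology.IsBounded A) :
    Monotone fun t : ℝ => (coveringNumber A (Real.exp (-t)) : ℝ) := fun s t hst => by
  have : Real.exp (-t) ≤ Real.exp (-s) := Real.exp_le_exp.2 (by linarith)
  exact Nat.cast_le.2 <| coveringNumber_mono hA subset_rfl (Real.exp_pos _) this

end Covering

section Similarity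

variable {d : ℕ} {S : Pt d → Pt d} {ρ : ℝ}

lemma similarity_surjective (hρ : 0 < ρ) (hS : ∀ x y, dist (S x) (S y) = ρ * dist x y) :
    Function.Surjective S := by
  have hi : Isometry fun x => ρ⁻¹ • S x := Isometry.of_dist_eq fun x y => by
    rw [dist_smul₀, hS, Real.norm_of_nonneg (inv_nonneg.2 hρ.le), inv_mul_cancel_left₀ hρ.ne']
  intro y
  let φ := hi.affineIsometryOfStrictConvexSpace.toAffineIsometryEquiv rfl
  obtain ⟨x, hx⟩ := φ.surjective (ρ⁻¹ • y)
  exact ⟨x, smul_right_injective _ (inv_ne_zero hρ.ne') hx⟩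

lemma similarity_injective (hρ : 0 < ρ) (hS : ∀ x y, dist (S x) (S y) = ρ * dist x y) :
    Function.Injective S := fun x y hxy => by
  have := hS x y
  rw [hxy, dist_self] at this
  exact dist_eq_zero.1 ((mul_eq_zero.1 this.symm).resolve_left hρ.ne')

lemma similarity_isBounded_image (hρ : 0 < ρ) (hS : ∀ x y, dist (S x) (S y) = ρ * dist x y)
    {A : Set (Pt d)} (hA : Bornology.IsBounded A) : Bornology.IsBounded (S '' A) :=
  (LipschitzWith.of_dist_le_mul (K := ⟨ρ, hρ.le⟩) fun x y => (hS x y).le).isBounded_image hA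

lemma coveringNumber_similarity_image (hρ : 0 < ρ)
    (hS : ∀ x y, dist (S x) (S y) = ρ * dist x y) (A : Set (Pt d)) (r : ℝ) :
    coveringNumber (S '' A) (ρ * r) = coveringNumber A r := by
  have hsurj := similarity_surjective hρ hS
  unfold _root_.coveringNumber
  congr 1
  ext k
  constructor
  · rintro ⟨c, hc⟩
    choose b hb using fun i => hsurj (c i)
    refine ⟨b, fun x hx => ?_⟩
    obtain ⟨i, hi⟩ := mem_iUnion.1 (hc (mem_image_of_mem S hx))
    rw [← hb i, mem_closedBall, hS] at hi
    exact mem_iUnion.2 ⟨i, mem_closedBall.2 (le_of_mul_le_mul_left hi hρ)⟩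
  · rintro ⟨c, hc⟩
    refine ⟨fun i => S (c i), ?_⟩
    rintro _ ⟨x, hx, rfl⟩
    obtain ⟨i, hi⟩ := mem_iUnion.1 (hc hx)
    refine mem_iUnion.2 ⟨i, mem_closedBall.2 ?_⟩
    rw [hS]
    exact mul_le_mul_of_nonneg_left (mem_closedBall.1 hi) hρ.le

lemma coveringNumber_similarity_image_exp (hρ : 0 < ρ)
    (hS : ∀ x y, dist (S x) (S y) = ρ * dist x y) (A : Set (Pt d)) (t : ℝ) :
    coveringNumber (S '' A) (Real.exp (-t)) =
      coveringNumber A (Real.exp (-(t + Real.log ρ))) := by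
  rw [← coveringNumber_similarity_image hρ hS A, neg_add, Real.exp_add, Real.exp_neg (Real.log ρ),
    Real.exp_log hρ, mul_comm (Real.exp (-t)), mul_inv_cancel_left₀ hρ.ne']

end Similarity

section Perron

variable {V : Type} [Fintype V] [DecidableEq V]

attribute [local instance] Matrix.linftyOpNormedRing Matrix.linftyOpNormedAlgebra

lemma exists_pow_row_sum_le {A : Matrix V V ℝ} (hρ : matrixSpectralRadius A = 1) {l : ℝ}
    (hl : 1 < l) : ∃ N : ℕ, N ≠ 0 ∧ ∀ i, ∑ j, (A ^ N) i j ≤ l ^ N := by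
  set M : Matrix V V ℂ := A.map (fun a : ℝ => (a : ℂ)) with hM
  have hbdd : BddAbove {x : ℝ | ∃ μ : ℂ, μ ∈ spectrum ℂ M ∧ x = ‖μ‖} := by
    by_contra hcon
    rw [matrixSpectralRadius, Real.sSup_of_not_bddAbove hcon] at hρ
    exact zero_ne_one hρ
  have hrad : spectralRadius ℂ M < ENNReal.ofReal l := by
    refine lt_of_le_of_lt (iSup₂_le fun μ hμ => ?_) (ENNReal.one_lt_ofReal.2 hl)
    have hle : ‖μ‖ ≤ 1 := hρ ▸ le_csSup hbdd ⟨μ, hμ, rfl⟩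
    exact_mod_cast hle
  have : CompleteSpace (Matrix V V ℂ) := FiniteDimensional.complete ℂ _
  have hev := (spectrum.pow_nnnorm_pow_one_div_tendsto_nhds_spectralRadius M).eventually
    (gt_mem_nhds hrad)
  obtain ⟨N, hN, hN0⟩ := (hev.and (eventually_ge_atTop 1)).exists
  have hNpos : (0 : ℝ) < N := by exact_mod_cast hN0
  refine ⟨N, by omega, fun i => ?_⟩
  have hnorm : ‖M ^ N‖ ≤ l ^ N := by
    have h1 := ENNReal.rpow_le_rpow hN.le hNpos.le
    rw [← ENNReal.rpow_mul, one_div_mul_cancel hNpos.ne', ENNReal.rpow_one, ENNReal.rpow_natCast,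
      ← ENNReal.ofReal_pow (by linarith)] at h1
    have h2 : ENNReal.ofReal ‖M ^ N‖ ≤ ENNReal.ofReal (l ^ N) := by
      rw [ofReal_norm]
      exact h1
    exact (ENNReal.ofReal_le_ofReal_iff (by positivity)).1 h2
  have hpow : M ^ N = (A ^ N).map (fun a : ℝ => (a : ℂ)) :=
    (map_pow (Complex.ofRealHom.mapMatrix) A N).symm
  calc ∑ j, (A ^ N) i j ≤ ∑ j, ‖(M ^ N) i j‖ := Finset.sum_le_sum fun j _ => by
        rw [hpow]; simpa using le_abs_self _
    _ ≤ ‖M ^ N‖ := by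
        rw [Matrix.linfty_opNorm_def]
        have := Finset.le_sup (f := fun i : V => ∑ j, ‖(M ^ N) i j‖₊) (Finset.mem_univ i)
        simpa using NNReal.coe_le_coe.2 this
    _ ≤ l ^ N := hnorm

lemma exists_one_le_mulVec_le {A : Matrix V V ℝ} (hA : ∀ i j, 0 ≤ A i j)
    (hρ : matrixSpectralRadius A = 1) {l : ℝ} (hl : 1 < l) :
    ∃ h : V → ℝ, (∀ i, 1 ≤ h i) ∧ ∀ i, (A.mulVec h) i ≤ l * h i := by
  obtain ⟨N, hN0, hN⟩ := exists_pow_row_sum_le hρ hl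
  have hl0 : 0 < l := by linarith
  have hpow : ∀ (n : ℕ) i j, 0 ≤ (A ^ n) i j := by
    intro n
    induction n with
    | zero => intro i j; rw [pow_zero, Matrix.one_apply]; split_ifs <;> norm_num
    | succ n ih =>
      intro i j
      rw [pow_succ, Matrix.mul_apply]
      exact Finset.sum_nonneg fun k _ => mul_nonneg (ih i k) (hA k j)
  let g : ℕ → V → ℝ := fun n i => l⁻¹ ^ n * ∑ j, (A ^ n) i j
  have hg : ∀ n i, 0 ≤ g n i := fun n i =>
    mul_nonneg (by positivity) (Finset.sum_nonneg fun j _ => hpow n i j)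
  have hg0 : ∀ i, g 0 i = 1 := fun i => by simp [g, Matrix.one_apply]
  have hgN : ∀ i, g N i ≤ 1 := fun i => by
    have : g N i ≤ l⁻¹ ^ N * l ^ N := mul_le_mul_of_nonneg_left (hN i) (by positivity)
    rwa [← mul_pow, inv_mul_cancel₀ hl0.ne', one_pow] at this
  have hstep : ∀ n i, ∑ k, A i k * g n k = l * g (n + 1) i := fun n i => by
    have : ∑ j, (A ^ (n + 1)) i j = ∑ k, A i k * ∑ j, (A ^ n) k j := by
      simp_rw [pow_succ', Matrix.mul_apply, Finset.mul_sum]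
      exact Finset.sum_comm
    simp only [g]
    rw [this]
    simp only [Finset.mul_sum]
    refine Finset.sum_congr rfl fun k _ => Finset.sum_congr rfl fun j _ => ?_
    rw [pow_succ]
    field_simp
  refine ⟨fun i => ∑ n ∈ Finset.range N, g n i, fun i => ?_, fun i => ?_⟩
  · rw [← hg0 i]
    exact Finset.single_le_sum (f := fun n => g n i) (fun n _ => hg n i)
      (Finset.mem_range.2 (Nat.pos_of_ne_zero hN0))
  · have h1 : (A.mulVec fun i => ∑ n ∈ Finset.range N, g n i) i
        = l * ∑ n ∈ Finset.range N, g (n + 1) i := by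
      simp only [Matrix.mulVec, dotProduct, Finset.mul_sum]
      rw [Finset.sum_comm]
      refine Finset.sum_congr rfl fun n _ => ?_
      rw [hstep]
    rw [h1]
    refine mul_le_mul_of_nonneg_left ?_ hl0.le
    have h2 := Finset.sum_range_succ (fun n => g n i) N
    rw [Finset.sum_range_succ'] at h2
    linarith [hg0 i, hgN i]

lemma exists_mem_stdSimplex_mulVec_le [Nonempty V] {A : Matrix V V ℝ} (hA : ∀ i j, 0 ≤ A i j)
    (hρ : matrixSpectralRadius A = 1) :
    ∃ h ∈ stdSimplex ℝ V, ∀ i, (A.mulVec h) i ≤ h i := by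
  have key : ∀ n : ℕ, ∃ h ∈ stdSimplex ℝ V,
      ∀ i, (A.mulVec h) i ≤ (1 + 1 / ((n : ℝ) + 1)) * h i := by
    intro n
    have hl : (1 : ℝ) < 1 + 1 / ((n : ℝ) + 1) := by
      have : (0 : ℝ) < 1 / ((n : ℝ) + 1) := by positivity
      linarith
    obtain ⟨h, h1, hle⟩ := exists_one_le_mulVec_le hA hρ hl
    have hpos : 0 < ∑ i, h i :=
      Finset.sum_pos (fun i _ => by linarith [h1 i]) Finset.univ_nonempty
    refine ⟨(∑ i, h i)⁻¹ • h, ⟨fun i => ?_, ?_⟩, fun i => ?_⟩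
    · exact mul_nonneg (inv_nonneg.2 hpos.le) (by linarith [h1 i])
    · simp only [Pi.smul_apply, smul_eq_mul, ← Finset.mul_sum]
      exact inv_mul_cancel₀ hpos.ne'
    · rw [Matrix.mulVec_smul, Pi.smul_apply, Pi.smul_apply, smul_eq_mul, smul_eq_mul,
        mul_left_comm]
      exact mul_le_mul_of_nonneg_left (hle i) (inv_nonneg.2 hpos.le)
  choose h hmem hle using key
  obtain ⟨h', hh', φ, hφ, hlim⟩ := (isCompact_stdSimplex ℝ V).tendsto_subseq hmem
  refine ⟨h', hh', fun i => ?_⟩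
  have hl1 : Tendsto (fun n => (A.mulVec (h (φ n))) i) atTop (𝓝 ((A.mulVec h') i)) := by
    have hc : Continuous fun v : V → ℝ => (A.mulVec v) i := by
      simp only [Matrix.mulVec, dotProduct]
      fun_prop
    exact (hc.tendsto h').comp hlim
  have hl2 : Tendsto (fun n => (1 + 1 / (((φ n : ℕ) : ℝ) + 1)) * h (φ n) i) atTop
      (𝓝 ((1 + 0) * h' i)) := by
    refine Tendsto.mul (tendsto_const_nhds.add ?_) ((tendsto_pi_nhds.1 hlim) i)
    exact (tendsto_one_div_add_atTop_nhds_zero_nat (𝕜 := ℝ)).comp hφ.tendsto_atTop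
  simpa using le_of_tendsto_of_tendsto' hl1 hl2 fun n => hle (φ n) i

/-- A strongly connected graph with `ρ(A_G^s) = 1` has a strictly positive subinvariant vector. -/
lemma MWGraph.exists_pos_subinvariant {d : ℕ} {E : Type} [Fintype E]
    (G : MWGraph d V E) (hSC : G.StronglyConnected) {s : ℝ}
    (hs : matrixSpectralRadius (G.Amatrix s) = 1) :
    ∃ h : V → ℝ, (∀ i, 0 < h i) ∧
      ∀ i, ∑ e with G.init e = i, G.r e ^ s * h (G.term e) ≤ h i := by
  rcases isEmpty_or_nonempty V with hV | hV
  · exact ⟨fun _ => 1, fun i => hV.elim i, fun i => hV.elim i⟩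
  have hterm : ∀ e, 0 < G.r e ^ s := fun e => Real.rpow_pos_of_pos (G.r_pos e) s
  obtain ⟨h, ⟨hnn, hsum⟩, hle⟩ := exists_mem_stdSimplex_mulVec_le (A := G.Amatrix s)
    (fun i j => Finset.sum_nonneg fun e _ => by
      split_ifs
      exacts [(hterm e).le, le_rfl]) hs
  have hsub : ∀ i, ∑ e with G.init e = i, G.r e ^ s * h (G.term e) ≤ h i := fun i => by
    refine le_of_eq_of_le ?_ (hle i)
    simp only [Matrix.mulVec, dotProduct, MWGraph.Amatrix, Matrix.of_apply, Finset.sum_mul]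
    rw [Finset.sum_comm, Finset.sum_filter]
    refine Finset.sum_congr rfl fun e _ => ?_
    by_cases he : G.init e = i <;> simp [he]
  have hpath : ∀ (γ : List E) (i : V), G.IsPathFrom i γ → 0 < h (G.pathTerm i γ) → 0 < h i := by
    intro γ
    induction γ with
    | nil => intro i _ h0; exact h0
    | cons e γ ih =>
      rintro i ⟨rfl, hγ⟩ h0
      refine (mul_pos (hterm e) (ih (G.term e) hγ h0)).trans_le (le_trans ?_ (hsub _))
      exact Finset.single_le_sum (f := fun e => G.r e ^ s * h (G.term e))
        (fun e' _ => mul_nonneg (hterm e').le (hnn _)) (by simp)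
  obtain ⟨j, hj⟩ : ∃ j, 0 < h j := by
    by_contra! hcon
    linarith [Finset.sum_nonpos fun i (_ : i ∈ Finset.univ) => hcon i]
  refine ⟨h, fun i => ?_, hsub⟩
  obtain ⟨γ, -, hγ, hend⟩ := hSC i j
  exact hpath γ i hγ (hend ▸ hj)

end Perron

/-- The points of `A` at distance at most `ρ` from some point outside `U`. -/
def nearCompl {d : ℕ} (U A : Set (Pt d)) (ρ : ℝ) : Set (Pt d) :=
  {y | y ∈ A ∧ ∃ z, z ∉ U ∧ dist y z ≤ ρ}

lemma nearCompl_subset {d : ℕ} (U A : Set (Pt d)) (ρ : ℝ) : nearCompl U A ρ ⊆ A :=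
  fun _ h => h.1

lemma nearCompl_mono {d : ℕ} {U A B : Set (Pt d)} {ρ ρ' : ℝ} (hAB : A ⊆ B) (hρ : ρ ≤ ρ') :
    nearCompl U A ρ ⊆ nearCompl U B ρ' :=
  fun _ ⟨hy, z, hz, h⟩ => ⟨hAB hy, z, hz, h.trans hρ⟩

namespace MWGraph

variable {d : ℕ} {V E : Type} [Fintype V] [Fintype E] (G : MWGraph d V E)
  {C K KC U : V → Set (Pt d)}

lemma exists_ratio_bounds : ∃ a b : ℝ, 0 < a ∧ 0 < b ∧ b < 1 ∧ ∀ e, a ≤ G.r e ∧ G.r e ≤ b := by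
  rcases isEmpty_or_nonempty E with hE | hE
  · exact ⟨1, 1 / 2, by norm_num, by norm_num, by norm_num, fun e => hE.elim e⟩
  · obtain ⟨e₀, h₀⟩ := Finite.exists_min G.r
    obtain ⟨e₁, h₁⟩ := Finite.exists_max G.r
    exact ⟨G.r e₀, G.r e₁, G.r_pos _, G.r_pos _, G.r_lt_one _, fun e => ⟨h₀ e, h₁ e⟩⟩

lemma inhomAttractor_subset_closure (hKC : G.IsInhomAttractor C KC) (hU : G.IsOSCWith U)
    (hCU : ∀ i, C i ⊆ closure (U i)) (i : V) : KC i ⊆ closure (U i) := by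
  obtain ⟨_, b, _, hb0, hb1, hb⟩ := G.exists_ratio_bounds
  obtain ⟨hUne, -, -, -, hUsub, -⟩ := hU
  have hbd : ∀ i, ∃ D, ∀ x ∈ KC i, infDist x (U i) ≤ D := fun i => by
    obtain ⟨D, hD⟩ := ((hKC.1 i).image (continuous_infDist_pt (U i))).bddAbove
    exact ⟨D, fun x hx => hD (mem_image_of_mem _ hx)⟩
  choose D hD using hbd
  have hDnn : ∀ i, 0 ≤ D i := fun i => by
    obtain ⟨x, hx⟩ := hKC.2.1 i
    exact infDist_nonneg.trans (hD i x hx)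
  have key : ∀ (n : ℕ) (i : V), ∀ x ∈ KC i, infDist x (U i) ≤ b ^ n * ∑ j, D j := by
    intro n
    induction n with
    | zero =>
      intro i x hx
      rw [pow_zero, one_mul]
      exact (hD i x hx).trans (Finset.single_le_sum (fun j _ => hDnn j) (Finset.mem_univ i))
    | succ n ih =>
      intro i x hx
      have hbn : 0 ≤ b ^ (n + 1) * ∑ j, D j :=
        mul_nonneg (by positivity) (Finset.sum_nonneg fun j _ => hDnn j)
      rw [hKC.2.2 i] at hx
      rcases hx with hx | hx
      · obtain ⟨e, he, y, hy, rfl⟩ := mem_iUnion₂.1 hx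
        refine le_of_forall_pos_le_add fun ε hε => ?_
        obtain ⟨u, hu, hyu⟩ := (infDist_lt_iff (hUne (G.term e))).1
          (lt_add_of_le_of_pos (ih _ y hy) hε)
        refine (infDist_le_dist_of_mem (hUsub i (mem_iUnion₂.2 ⟨e, he, u, hu, rfl⟩))).trans ?_
        rw [G.S_sim]
        calc G.r e * dist y u ≤ b * (b ^ n * ∑ j, D j + ε) :=
              mul_le_mul (hb e).2 hyu.le dist_nonneg hb0.le
          _ ≤ b ^ (n + 1) * ∑ j, D j + ε := by
              rw [pow_succ]; nlinarith
      · rw [(mem_closure_iff_infDist_zero (hUne i)).1 (hCU i hx)]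
        exact hbn
  intro x hx
  rw [mem_closure_iff_infDist_zero (hUne i)]
  refine le_antisymm (ge_of_tendsto' (b := infDist x (U i)) (f := fun n : ℕ => b ^ n * ∑ j, D j)
    (x := atTop) ?_
    fun n => key n i x hx) infDist_nonneg
  simpa using (tendsto_pow_atTop_nhds_zero_of_lt_one hb0.le hb1).mul_const (∑ j, D j)

lemma exists_path_approx (hK : G.IsAttractor K) {b D : ℝ} (hb0 : 0 ≤ b) (hb : ∀ e, G.r e ≤ b)
    (hD : ∀ i, ∀ x ∈ K i, ∀ y ∈ KC i, dist x y ≤ D) (n : ℕ) :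
    ∀ i, ∀ x ∈ K i, ∃ w, G.IsPathFrom i w ∧
      ∀ y ∈ KC (G.pathTerm i w), dist x (G.pathMap w y) ≤ b ^ n * D := by
  induction n with
  | zero => exact fun i x hx => ⟨[], trivial, fun y hy => by simpa [pathMap] using hD i x hx y hy⟩
  | succ n ih =>
    intro i x hx
    rw [hK.2.2 i] at hx
    obtain ⟨e, he, x', hx', rfl⟩ := mem_iUnion₂.1 hx
    obtain ⟨w, hw, h⟩ := ih (G.term e) x' hx'
    refine ⟨e :: w, ⟨he, hw⟩, fun y hy => ?_⟩
    change dist (G.S e x') (G.S e (G.pathMap w y)) ≤ _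
    rw [G.S_sim, pow_succ', mul_assoc]
    exact mul_le_mul (hb e) (h y hy) dist_nonneg hb0

/-- Each vertex starts a path whose cell keeps a positive distance from the complement of `U i`. -/
lemma exists_path_deep (hK : G.IsAttractor K) (hKC : G.IsInhomAttractor C KC)
    (hU : G.IsOSCWith U) (hUK : ∀ i, (U i ∩ K i).Nonempty) (i : V) :
    ∃ w, G.IsPathFrom i w ∧ ∃ δ > 0, ∀ y ∈ G.pathMap w '' KC (G.pathTerm i w), ∀ z, z ∉ U i →
      δ ≤ dist y z := by
  obtain ⟨_, b, _, hb0, hb1, hb⟩ := G.exists_ratio_bounds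
  have hbd : ∀ i, ∃ D, ∀ x ∈ K i, ∀ y ∈ KC i, dist x y ≤ D := fun i => by
    obtain ⟨D, hD⟩ := isBounded_iff.1 ((hK.1 i).isBounded.union (hKC.1 i).isBounded)
    exact ⟨D, fun x hx y hy => hD (Or.inl hx) (Or.inr hy)⟩
  choose D hD using hbd
  have hDnn : ∀ i, 0 ≤ D i := fun i => by
    obtain ⟨x, hx⟩ := hK.2.1 i
    obtain ⟨y, hy⟩ := hKC.2.1 i
    exact dist_nonneg.trans (hD i x hx y hy)
  obtain ⟨x, hxU, hxK⟩ := hUK i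
  obtain ⟨ε, hε, hball⟩ := isOpen_iff.1 (hU.2.1 i) x hxU
  have hlim : Tendsto (fun n : ℕ => b ^ n * ∑ j, D j) atTop (𝓝 0) := by
    simpa using (tendsto_pow_atTop_nhds_zero_of_lt_one hb0.le hb1).mul_const (∑ j, D j)
  obtain ⟨n, hn⟩ := (hlim.eventually (gt_mem_nhds (half_pos hε))).exists
  obtain ⟨w, hw, h⟩ := G.exists_path_approx hK (KC := KC) (D := ∑ j, D j) hb0.le
    (fun e => (hb e).2)
    (fun j p hp q hq => (hD j p hp q hq).trans
      (Finset.single_le_sum (fun j _ => hDnn j) (Finset.mem_univ j))) n i x hxK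
  refine ⟨w, hw, ε / 2, half_pos hε, ?_⟩
  rintro _ ⟨y, hy, rfl⟩ z hz
  have h1 : ε ≤ dist z x := not_lt.1 fun hlt => hz (hball hlt)
  have h2 := h y hy
  have h3 := dist_triangle_left z x (G.pathMap w y)
  rw [dist_comm x] at h2
  linarith

lemma nearCompl_subset_union (hKC : G.IsInhomAttractor C KC) (hU : G.IsOSCWith U) (i : V)
    (D : Set (Pt d)) (ρ : ℝ) [DecidableEq V] :
    nearCompl (U i) (KC i \ D) ρ ⊆ C i ∪ ⋃ e ∈ Finset.univ.filter (fun e => G.init e = i),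
      G.S e '' nearCompl (U (G.term e)) (KC (G.term e) \ G.S e ⁻¹' D) (ρ / G.r e) := by
  rintro y ⟨⟨hy, hyD⟩, z, hz, hyz⟩
  rw [hKC.2.2 i] at hy
  rcases hy with hy | hy
  · obtain ⟨e, he, y', hy', rfl⟩ := mem_iUnion₂.1 hy
    obtain ⟨z', rfl⟩ := similarity_surjective (G.r_pos e) (G.S_sim e) z
    refine Or.inr (mem_iUnion₂.2 ⟨e, by simpa using he, y', ⟨⟨hy', hyD⟩, z', fun hz' => hz ?_, ?_⟩,
      rfl⟩)
    · exact hU.2.2.2.2.1 i (mem_iUnion₂.2 ⟨e, he, z', hz', rfl⟩)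
    · rw [G.S_sim] at hyz
      rw [le_div_iff₀' (G.r_pos e)]
      exact hyz
  · exact Or.inl hy

/-- A cell meets another cell only near the complement of its own open set. -/
lemma mem_nearCompl_of_dist_le (hU : G.IsOSCWith U) (hKU : ∀ i, KC i ⊆ closure (U i))
    {e e' : E} (hinit : G.init e = G.init e') (hne : e ≠ e') {x x' : Pt d}
    (hx : x ∈ KC (G.term e)) (hx' : x' ∈ KC (G.term e')) {ρ : ℝ}
    (hd : dist (G.S e x) (G.S e' x') ≤ ρ) :
    x ∈ nearCompl (U (G.term e)) (KC (G.term e)) (ρ / G.r e) := by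
  obtain ⟨z, hz⟩ := similarity_surjective (G.r_pos e) (G.S_sim e) (G.S e' x')
  refine ⟨hx, z, fun hzU => ?_, ?_⟩
  · obtain ⟨ε, hε, hball⟩ := isOpen_iff.1 (hU.2.1 _) z hzU
    obtain ⟨u, hu, hxu⟩ := Metric.mem_closure_iff.1 (hKU _ hx') (G.r e * ε)
      (mul_pos (G.r_pos e) hε)
    obtain ⟨p, hp⟩ := similarity_surjective (G.r_pos e) (G.S_sim e) (G.S e' u)
    have hpz : G.r e * dist p z < G.r e * ε := by
      rw [← G.S_sim, hp, hz, G.S_sim, dist_comm]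
      exact (mul_le_of_le_one_left dist_nonneg (G.r_lt_one e').le).trans_lt hxu
    have hpU : p ∈ U (G.term e) := hball (lt_of_mul_lt_mul_left hpz (G.r_pos e).le)
    exact Set.disjoint_left.1 (hU.2.2.2.2.2 e e' hinit hne) ⟨p, hpU, hp⟩ ⟨u, hu, rfl⟩
  · rw [← hz, G.S_sim] at hd
    rwa [le_div_iff₀' (G.r_pos e)]

lemma pathRatio_pos (w : List E) : 0 < G.pathRatio w :=
  List.prod_pos fun x hx => by
    obtain ⟨e, -, rfl⟩ := List.mem_map.1 hx
    exact G.r_pos e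

/-- Renewal estimate: a defective renewal inequality, in which a cell below every vertex is
missing, bounds all backward sums. -/
lemma exists_renewal_bound [DecidableEq V] {s : ℝ} (hs : 0 ≤ s) {h : V → ℝ} (hh : ∀ i, 0 < h i)
    (hsub : ∀ i, ∑ e with G.init e = i, G.r e ^ s * h (G.term e) ≤ h i)
    {q : V → Set (Pt d) → ℝ → ℝ} {g : ℝ → ℝ} {c : ℝ}
    (hc : ∀ t N, ∑ n ∈ Finset.range N, g (t - n) ≤ c)
    (hqneg : ∀ i D t, t < 0 → q i D t = 0)
    (hqanti : ∀ i D t, q i D t ≤ q i ∅ t)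
    (hqrec : ∀ i D t, q i D t ≤ g t + ∑ e with G.init e = i,
      G.r e ^ s * q (G.term e) (G.S e ⁻¹' D) (t + Real.log (G.r e)))
    (hqK : ∀ i t, q i (KC i) t ≤ 0)
    {w : V → List E} (hw : ∀ i, G.IsPathFrom i (w i))
    (hqw : ∀ i t, q i ∅ t ≤ g t + q i (G.pathMap (w i) '' KC (G.pathTerm i (w i))) t) :
    ∃ R, ∀ i t N, ∑ n ∈ Finset.range N, q i ∅ (t - n) ≤ R * h i := by
  classical
  obtain ⟨_, b, _, hb0, hb1, hb⟩ := G.exists_ratio_bounds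
  have hc0 : 0 ≤ c := by simpa using hc 0 0
  have hτ : 0 < -Real.log b := neg_pos.2 (Real.log_neg hb0 hb1)
  let η : V → List E → ℝ := fun i w => G.pathRatio w ^ s * h (G.pathTerm i w)
  have hη : ∀ i w, 0 < η i w := fun i w =>
    mul_pos (Real.rpow_pos_of_pos (G.pathRatio_pos w) s) (hh _)
  let κ : V → ℝ := fun i => (1 + (w i).length) * c / η i (w i)
  have hκ : ∀ i, 0 ≤ κ i := fun i =>
    div_nonneg (mul_nonneg (by positivity) hc0) (hη i _).le
  refine ⟨∑ i, κ i, fun i t N => ?_⟩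
  have hR : ∀ i, (1 + (w i).length) * c ≤ (∑ i, κ i) * η i (w i) := fun i => by
    rw [← div_le_iff₀ (hη i _)]
    exact Finset.single_le_sum (fun j _ => hκ j) (Finset.mem_univ i)
  have hR0 : 0 ≤ ∑ i, κ i := Finset.sum_nonneg fun j _ => hκ j
  generalize (∑ i, κ i) = R at hR hR0 ⊢
  have key : ∀ (m : ℕ) (t : ℝ), t < m * -Real.log b → ∀ i N,
      ∑ n ∈ Finset.range N, q i ∅ (t - n) ≤ R * h i := by
    intro m
    induction m with
    | zero =>
      intro t ht i N
      rw [Nat.cast_zero, zero_mul] at ht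
      refine le_of_eq_of_le (Finset.sum_eq_zero fun n _ => hqneg _ _ _ ?_)
        (mul_nonneg hR0 (hh i).le)
      have : (0 : ℝ) ≤ n := n.cast_nonneg
      linarith
    | succ m ih =>
      have hshift : ∀ t e, t < ((m + 1 : ℕ) : ℝ) * -Real.log b →
          t + Real.log (G.r e) < m * -Real.log b := fun t e ht => by
        have := Real.log_le_log (G.r_pos e) (hb e).2
        push_cast at ht
        linarith
      have hpath : ∀ (w : List E) (i : V) (t : ℝ), G.IsPathFrom i w →
          t < ((m + 1 : ℕ) : ℝ) * -Real.log b → ∀ N,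
          ∑ n ∈ Finset.range N, q i (G.pathMap w '' KC (G.pathTerm i w)) (t - n) ≤
            w.length * c + R * (h i - η i w) := by
        intro w
        induction w with
        | nil =>
          intro i t _ _ N
          have h1 : G.pathMap [] '' KC (G.pathTerm i []) = KC i := image_id _
          have h2 : η i [] = h i := by simp [η, pathRatio, pathTerm]
          rw [h1, h2]
          simpa using Finset.sum_nonpos fun n (_ : n ∈ Finset.range N) => hqK i (t - n)
        | cons e₀ w ihw =>
          rintro i t ⟨rfl, hw⟩ ht N
          set D := G.pathMap (e₀ :: w) '' KC (G.pathTerm (G.init e₀) (e₀ :: w)) with hD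
          have hpre : G.S e₀ ⁻¹' D = G.pathMap w '' KC (G.pathTerm (G.term e₀) w) := by
            rw [hD]
            change G.S e₀ ⁻¹' ((G.S e₀ ∘ G.pathMap w) '' _) = _
            rw [image_comp, preimage_image_eq _ (similarity_injective (G.r_pos e₀) (G.S_sim e₀))]
            rfl
          have hηc : η (G.init e₀) (e₀ :: w) = G.r e₀ ^ s * η (G.term e₀) w := by
            have hprod : G.pathRatio (e₀ :: w) = G.r e₀ * G.pathRatio w := by simp [pathRatio]
            simp only [η, hprod, pathTerm]
            rw [Real.mul_rpow (G.r_pos e₀).le (G.pathRatio_pos w).le, mul_assoc]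
          have hrs : ∀ e, 0 ≤ G.r e ^ s := fun e => Real.rpow_nonneg (G.r_pos e).le s
          have hedge : ∀ e ∈ Finset.univ.filter (fun e => G.init e = G.init e₀),
              ∑ n ∈ Finset.range N, G.r e ^ s *
                q (G.term e) (G.S e ⁻¹' D) (t - n + Real.log (G.r e)) ≤
              R * (G.r e ^ s * h (G.term e)) +
                if e = e₀ then w.length * c - R * (G.r e₀ ^ s * η (G.term e₀) w) else 0 := by
            intro e _
            simp_rw [sub_add_eq_add_sub]
            rw [← Finset.mul_sum]
            split_ifs with he
            · subst he
              rw [hpre]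
              have h1 := ihw (G.term e) (t + Real.log (G.r e)) hw
                (by have := Real.log_neg (G.r_pos e) (G.r_lt_one e); linarith) N
              have h2 := mul_le_mul_of_nonneg_left h1 (hrs e)
              have h3 : G.r e ^ s * (w.length * c) ≤ w.length * c :=
                mul_le_of_le_one_left (by positivity)
                  (Real.rpow_le_one (G.r_pos e).le (G.r_lt_one e).le hs)
              linarith
            · have h1 := ih _ (hshift t e ht) (G.term e) N
              have h2 := (Finset.sum_le_sum fun n (_ : n ∈ Finset.range N) =>
                hqanti (G.term e) (G.S e ⁻¹' D) (t + Real.log (G.r e) - n)).trans h1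
              have h3 := mul_le_mul_of_nonneg_left h2 (hrs e)
              linarith
          calc ∑ n ∈ Finset.range N, q (G.init e₀) D (t - n)
              ≤ ∑ n ∈ Finset.range N, (g (t - n) + ∑ e with G.init e = G.init e₀,
                  G.r e ^ s * q (G.term e) (G.S e ⁻¹' D) (t - n + Real.log (G.r e))) :=
                Finset.sum_le_sum fun n _ => hqrec _ _ _
            _ ≤ c + ∑ e with G.init e = G.init e₀, (R * (G.r e ^ s * h (G.term e)) +
                  if e = e₀ then w.length * c - R * (G.r e₀ ^ s * η (G.term e₀) w) else 0) := by
                rw [Finset.sum_add_distrib, Finset.sum_comm]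
                exact add_le_add (hc t N) (Finset.sum_le_sum hedge)
            _ = c + (R * ∑ e with G.init e = G.init e₀, G.r e ^ s * h (G.term e)) +
                  (w.length * c - R * (G.r e₀ ^ s * η (G.term e₀) w)) := by
                rw [Finset.sum_add_distrib, ← Finset.mul_sum, Finset.sum_ite_eq', add_assoc]
                simp
            _ ≤ (e₀ :: w).length * c + R * (h (G.init e₀) - η (G.init e₀) (e₀ :: w)) := by
                rw [hηc, List.length_cons]
                push_cast
                have := mul_le_mul_of_nonneg_left (hsub (G.init e₀)) hR0
                linarith
      intro t ht i N
      have h1 := hpath (w i) i t (hw i) ht N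
      have h2 := Finset.sum_le_sum fun n (_ : n ∈ Finset.range N) => hqw i (t - n)
      rw [Finset.sum_add_distrib] at h2
      have h3 := hc t N
      have h4 := hR i
      linarith
  obtain ⟨m, hm⟩ := exists_nat_gt (t / -Real.log b)
  exact key m t ((div_lt_iff₀ hτ).1 hm) i N

end MWGraph

lemma sum_range_comp_floor_le {a : ℕ → ℝ} (ha : ∀ k, 0 ≤ a k) (hsum : Summable a) (t : ℝ)
    (N : ℕ) :
    ∑ n ∈ Finset.range N, (if 0 ≤ t - n then a ⌊t - n⌋₊ else 0) ≤ ∑' k, a k := by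
  rw [← Finset.sum_filter]
  have hinj : Set.InjOn (fun n : ℕ => ⌊t - n⌋₊)
      ((Finset.range N).filter fun n : ℕ => 0 ≤ t - n) := by
    intro m hm n hn hmn
    have hm' : 0 ≤ t - m := (Finset.mem_filter.1 hm).2
    have hn' : 0 ≤ t - n := (Finset.mem_filter.1 hn).2
    have h1 := Nat.floor_le hm'
    have h2 := Nat.lt_floor_add_one (t - m)
    have h3 := Nat.floor_le hn'
    have h4 := Nat.lt_floor_add_one (t - n)
    simp only at hmn
    rw [hmn] at h1 h2
    have h5 : (m : ℝ) < n + 1 := by linarith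
    have h6 : (n : ℝ) < m + 1 := by linarith
    have h7 : m < n + 1 := by exact_mod_cast h5
    have h8 : n < m + 1 := by exact_mod_cast h6
    omega
  rw [← Finset.sum_image (f := a) hinj]
  exact hsum.sum_le_tsum _ fun k _ => ha k

lemma summable_coveringNumber_of_lintegral {d : ℕ} {A : Set (Pt d)} (hA : Bornology.IsBounded A)
    {s : ℝ} (hs : 0 ≤ s)
    (hint : ∫⁻ t in Set.Ioi (0 : ℝ),
      ENNReal.ofReal (Real.exp (-s * t) * (coveringNumber A (Real.exp (-t)) : ℝ)) < ⊤) :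
    Summable fun k : ℕ =>
      Real.exp (-s * k) * (coveringNumber A (Real.exp (-((k : ℝ) + 1))) : ℝ) := by
  set F : ℝ → ENNReal := fun t =>
    ENNReal.ofReal (Real.exp (-s * t) * (coveringNumber A (Real.exp (-t)) : ℝ)) with hF
  set a : ℕ → ℝ := fun k =>
    Real.exp (-s * k) * (coveringNumber A (Real.exp (-((k : ℝ) + 1))) : ℝ) with ha
  let I : ℕ → Set ℝ := fun k => Set.Ioc ((k : ℝ) + 1) ((k : ℝ) + 2)
  have hle : ∀ k, ENNReal.ofReal (a k) ≤ ENNReal.ofReal (Real.exp (2 * s)) * ∫⁻ t in I k, F t := by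
    intro k
    have hvol : volume (I k) = 1 := by
      rw [Real.volume_Ioc]
      norm_num
    calc ENNReal.ofReal (a k) = ∫⁻ _ in I k, ENNReal.ofReal (a k) := by
          rw [setLIntegral_const, hvol, mul_one]
      _ ≤ ∫⁻ t in I k, ENNReal.ofReal (Real.exp (2 * s)) * F t := by
          refine setLIntegral_mono' measurableSet_Ioc fun t ht => ?_
          rw [hF, ← ENNReal.ofReal_mul (Real.exp_pos _).le, ← mul_assoc, ← Real.exp_add]
          refine ENNReal.ofReal_le_ofReal (mul_le_mul ?_ ?_ (Nat.cast_nonneg _)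
            (Real.exp_pos _).le)
          · refine Real.exp_le_exp.2 ?_
            nlinarith [ht.2]
          · exact monotone_coveringNumber_exp_neg hA ht.1.le
      _ = _ := lintegral_const_mul' _ _ ENNReal.ofReal_ne_top
  have hdisj : Pairwise (Function.onFun Disjoint I) := by
    have hm : Monotone fun k : ℕ => (k : ℝ) + 1 := fun m n hmn => by
      have : (m : ℝ) ≤ n := by exact_mod_cast hmn
      simpa using this
    have := hm.pairwise_disjoint_on_Ioc_succ
    convert! this using 3 with k
    simp only [I, Nat.succ_eq_succ, Nat.succ_eq_add_one]
    push_cast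
    ring_nf
  have htsum : ∑' k, ENNReal.ofReal (a k) ≠ ⊤ := by
    refine ne_top_of_le_ne_top (ENNReal.mul_ne_top (ENNReal.ofReal_ne_top (r := Real.exp (2 * s)))
      hint.ne) ((ENNReal.tsum_le_tsum hle).trans ?_)
    rw [ENNReal.tsum_mul_left, ← lintegral_iUnion (fun k => measurableSet_Ioc) hdisj]
    gcongr
    refine iUnion_subset fun k t ht => ?_
    have : (0 : ℝ) ≤ k := k.cast_nonneg
    exact lt_trans (by linarith) ht.1
  refine (ENNReal.summable_toReal htsum).congr fun k => ENNReal.toReal_ofReal ?_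
  exact mul_nonneg (Real.exp_pos _).le (Nat.cast_nonneg _)

namespace MWGraph

variable {d : ℕ} {V E : Type}

/-- The rescaled covering number, at scale `e^{-t}`, of the points of `KC i \ D` within
`c e^{-t}` of the complement of `U i`; zero for negative `t`. -/
def layer (KC U : V → Set (Pt d)) (s c : ℝ) (i : V) (D : Set (Pt d)) (t : ℝ) : ℝ :=
  if 0 ≤ t then Real.exp (-s * t) *
    (coveringNumber (nearCompl (U i) (KC i \ D) (c * Real.exp (-t))) (Real.exp (-t)) : ℝ) else 0

lemma layer_nonneg (KC U : V → Set (Pt d)) (s c : ℝ) (i : V) (D : Set (Pt d)) (t : ℝ) :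
    0 ≤ layer KC U s c i D t := by
  unfold layer
  split_ifs
  exacts [mul_nonneg (Real.exp_pos _).le (Nat.cast_nonneg _), le_rfl]

lemma layer_of_neg {KC U : V → Set (Pt d)} {s c : ℝ} {i : V} {D : Set (Pt d)} {t : ℝ}
    (ht : t < 0) : layer KC U s c i D t = 0 := if_neg (not_le.2 ht)

lemma layer_of_nonneg {KC U : V → Set (Pt d)} {s c : ℝ} {i : V} {D : Set (Pt d)} {t : ℝ}
    (ht : 0 ≤ t) : layer KC U s c i D t = Real.exp (-s * t) *
      (coveringNumber (nearCompl (U i) (KC i \ D) (c * Real.exp (-t))) (Real.exp (-t)) : ℝ) :=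
  if_pos ht

variable [Fintype V] [Fintype E] (G : MWGraph d V E) {C K KC U : V → Set (Pt d)} {s : ℝ}

lemma exp_eq_rpow_mul_exp_shift (e : E) (s t : ℝ) :
    Real.exp (-s * t) = G.r e ^ s * Real.exp (-s * (t + Real.log (G.r e))) := by
  rw [Real.rpow_def_of_pos (G.r_pos e), ← Real.exp_add]
  congr 1
  ring

variable [DecidableEq V]

lemma layer_le_renewal (hC : G.IsCondensation C) (hKC : G.IsInhomAttractor C KC)
    (hU : G.IsOSCWith U) (c : ℝ) (i : V) (D : Set (Pt d)) {t : ℝ} (ht : 0 ≤ t)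
    (hte : ∀ e, 0 ≤ t + Real.log (G.r e)) :
    layer KC U s c i D t ≤
      Real.exp (-s * t) * (coveringNumber (C i) (Real.exp (-t)) : ℝ) +
      ∑ e with G.init e = i,
        G.r e ^ s * layer KC U s c (G.term e) (G.S e ⁻¹' D) (t + Real.log (G.r e)) := by
  have hbd : ∀ e, Bornology.IsBounded (nearCompl (U (G.term e)) (KC (G.term e) \ G.S e ⁻¹' D)
      (c * Real.exp (-t) / G.r e)) := fun e =>
    (hKC.1 (G.term e)).isBounded.subset ((nearCompl_subset _ _ _).trans sdiff_subset)
  have hbdS := fun e => similarity_isBounded_image (G.r_pos e) (G.S_sim e) (hbd e)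
  have hbdU := (Bornology.isBounded_biUnion_finset
    (Finset.univ.filter (fun e => G.init e = i))).2 fun e _ => hbdS e
  have hr : 0 < Real.exp (-t) := Real.exp_pos _
  have hnat := (coveringNumber_mono ((hC i).1.isBounded.union hbdU)
    (G.nearCompl_subset_union hKC hU i D (c * Real.exp (-t))) hr le_rfl).trans
    ((coveringNumber_union_le (hC i).1.isBounded hbdU hr).trans
      (Nat.add_le_add_left (coveringNumber_biUnion_le _ _ (fun e _ => hbdS e) hr) _))
  have hreal : ((coveringNumber (nearCompl (U i) (KC i \ D) (c * Real.exp (-t)))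
      (Real.exp (-t)) : ℕ) : ℝ) ≤ _ := Nat.cast_le.2 hnat
  rw [layer_of_nonneg ht]
  refine (mul_le_mul_of_nonneg_left hreal (Real.exp_pos _).le).trans (le_of_eq ?_)
  push_cast
  rw [mul_add, Finset.mul_sum]
  congr 1
  refine Finset.sum_congr rfl fun e _ => ?_
  rw [layer_of_nonneg (hte e), ← mul_assoc, ← G.exp_eq_rpow_mul_exp_shift,
    coveringNumber_similarity_image_exp (G.r_pos e) (G.S_sim e)]
  have : c * Real.exp (-(t + Real.log (G.r e))) = c * Real.exp (-t) / G.r e := by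
    rw [neg_add, Real.exp_add, Real.exp_neg (Real.log _), Real.exp_log (G.r_pos e)]
    ring
  rw [this]

/-- The boundary layers at the scales `e^{-k}` have summable rescaled covering numbers. -/
lemma summable_layer (hSC : G.StronglyConnected) (hC : G.IsCondensation C)
    (hK : G.IsAttractor K) (hKC : G.IsInhomAttractor C KC) (hU : G.IsOSCWith U)
    (hUK : ∀ i, (U i ∩ K i).Nonempty) (hs : IsS0 G s)
    (hsum : ∀ i, Summable fun k : ℕ =>
      Real.exp (-s * k) * (coveringNumber (C i) (Real.exp (-((k : ℝ) + 1))) : ℝ))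
    (c : ℝ) (i : V) : Summable fun k : ℕ => layer KC U s c i ∅ k := by
  obtain ⟨h, hh, hsub⟩ := G.exists_pos_subinvariant hSC hs.2
  choose w hw δ hδ hdeep using G.exists_path_deep hK hKC hU hUK
  obtain ⟨t₁, ht₁0, ht₁r, ht₁δ⟩ : ∃ t₁ : ℝ, 0 ≤ t₁ ∧ (∀ e, 0 ≤ t₁ + Real.log (G.r e)) ∧
      ∀ i t, t₁ < t → c * Real.exp (-t) < δ i := by
    have h1 : ∀ᶠ t₁ : ℝ in atTop, ∀ e, 0 ≤ t₁ + Real.log (G.r e) :=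
      eventually_all.2 fun e => (eventually_ge_atTop (-Real.log (G.r e))).mono
        fun t ht => by linarith
    have h2 : ∀ᶠ t₁ : ℝ in atTop, ∀ i, |c| * Real.exp (-t₁) < δ i := by
      refine eventually_all.2 fun i => ?_
      have : Tendsto (fun t : ℝ => |c| * Real.exp (-t)) atTop (𝓝 (|c| * 0)) :=
        (Real.tendsto_exp_neg_atTop_nhds_zero).const_mul _
      rw [mul_zero] at this
      exact this.eventually (gt_mem_nhds (hδ i))
    obtain ⟨t₁, ⟨h1, h2⟩, h0⟩ := ((h1.and h2).and (eventually_ge_atTop 0)).exists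
    refine ⟨t₁, h0, h1, fun i t ht => lt_of_le_of_lt ?_ (h2 i)⟩
    exact mul_le_mul (le_abs_self c) (Real.exp_le_exp.2 (by linarith)) (Real.exp_pos _).le
      (abs_nonneg c)
  let a : ℕ → ℝ := fun k =>
    ∑ i, (Real.exp (-s * k) * (coveringNumber (C i) (Real.exp (-((k : ℝ) + 1))) : ℝ)) +
      if (k : ℝ) ≤ t₁ then ∑ i, (coveringNumber (KC i) (Real.exp (-t₁)) : ℝ) else 0
  have hCnn : ∀ (k : ℕ) i,
      0 ≤ Real.exp (-s * k) * (coveringNumber (C i) (Real.exp (-((k : ℝ) + 1))) : ℝ) :=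
    fun k i => mul_nonneg (Real.exp_pos _).le (Nat.cast_nonneg _)
  have hKnn : 0 ≤ ∑ i, (coveringNumber (KC i) (Real.exp (-t₁)) : ℝ) :=
    Finset.sum_nonneg fun _ _ => Nat.cast_nonneg _
  have ha : ∀ k, 0 ≤ a k := fun k => by
    refine add_nonneg (Finset.sum_nonneg fun i _ => hCnn k i) ?_
    split_ifs
    exacts [hKnn, le_rfl]
  have hasum : Summable a := by
    refine (summable_sum fun i _ => hsum i).add
      (summable_of_ne_finset_zero (s := Finset.range (⌊t₁⌋₊ + 1)) fun k hk => if_neg fun hkt => ?_)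
    exact hk (Finset.mem_range.2 (Nat.lt_succ_of_le (Nat.le_floor hkt)))
  let g : ℝ → ℝ := fun t => if 0 ≤ t then a ⌊t⌋₊ else 0
  have hg : ∀ t, 0 ≤ g t := fun t => by
    simp only [g]
    split_ifs
    exacts [ha _, le_rfl]
  have hCg : ∀ i t, 0 ≤ t →
      Real.exp (-s * t) * (coveringNumber (C i) (Real.exp (-t)) : ℝ) ≤ g t := by
    intro i t ht
    simp only [g, if_pos ht, a]
    have h1 : Real.exp (-s * t) * (coveringNumber (C i) (Real.exp (-t)) : ℝ) ≤
        Real.exp (-s * ⌊t⌋₊) *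
          (coveringNumber (C i) (Real.exp (-((⌊t⌋₊ : ℝ) + 1))) : ℝ) := by
      refine mul_le_mul (Real.exp_le_exp.2 ?_) ?_ (Nat.cast_nonneg _) (Real.exp_pos _).le
      · nlinarith [Nat.floor_le ht, hs.1]
      · exact monotone_coveringNumber_exp_neg (hC i).1.isBounded (Nat.lt_floor_add_one t).le
    have h2 := Finset.single_le_sum (fun j _ => hCnn ⌊t⌋₊ j) (Finset.mem_univ i)
    refine (h1.trans h2).trans (le_add_of_nonneg_right ?_)
    split_ifs
    exacts [hKnn, le_rfl]
  have hearly : ∀ i D t, t ≤ t₁ → layer KC U s c i D t ≤ g t := by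
    intro i D t ht
    rcases lt_or_ge t 0 with ht0 | ht0
    · rw [layer_of_neg ht0]
      exact hg t
    rw [layer_of_nonneg ht0]
    simp only [g, if_pos ht0, a, if_pos ((Nat.floor_le ht0).trans ht)]
    have h1 : (coveringNumber (nearCompl (U i) (KC i \ D) (c * Real.exp (-t)))
        (Real.exp (-t)) : ℝ) ≤ (coveringNumber (KC i) (Real.exp (-t₁)) : ℝ) :=
      Nat.cast_le.2 (coveringNumber_mono (hKC.1 i).isBounded
        ((nearCompl_subset _ _ _).trans sdiff_subset) (Real.exp_pos _)
        (Real.exp_le_exp.2 (by linarith)))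
    have h2 : Real.exp (-s * t) ≤ 1 := Real.exp_le_one_iff.2 (by nlinarith [hs.1])
    have h3 := Finset.single_le_sum
      (fun j _ => Nat.cast_nonneg (α := ℝ) (coveringNumber (KC j) (Real.exp (-t₁))))
      (Finset.mem_univ i)
    refine le_add_of_nonneg_of_le (Finset.sum_nonneg fun i _ => hCnn _ i) ?_
    exact ((mul_le_of_le_one_left (Nat.cast_nonneg _) h2).trans h1).trans h3
  obtain ⟨R, hR⟩ := G.exists_renewal_bound (KC := KC) hs.1 hh hsub
    (q := layer KC U s c) (g := g) (c := ∑' k, a k)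
    (fun t N => sum_range_comp_floor_le ha hasum t N)
    (fun i D t ht => layer_of_neg ht)
    (fun i D t => by
      rcases lt_or_ge t 0 with ht0 | ht0
      · rw [layer_of_neg ht0, layer_of_neg ht0]
      · rw [layer_of_nonneg ht0, layer_of_nonneg ht0]
        refine mul_le_mul_of_nonneg_left (Nat.cast_le.2 ?_) (Real.exp_pos _).le
        exact coveringNumber_mono
          ((hKC.1 i).isBounded.subset ((nearCompl_subset _ _ _).trans sdiff_subset))
          (nearCompl_mono (sdiff_subset_sdiff_right (empty_subset _)) le_rfl) (Real.exp_pos _) le_rfl)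
    (fun i D t => by
      rcases le_or_gt t t₁ with ht | ht
      · exact le_add_of_le_of_nonneg (hearly i D t ht) (Finset.sum_nonneg fun e _ =>
          mul_nonneg (Real.rpow_nonneg (G.r_pos e).le s) (layer_nonneg _ _ _ _ _ _ _))
      · have ht0 : 0 ≤ t := ht₁0.trans ht.le
        exact (G.layer_le_renewal hC hKC hU c i D ht0 fun e => by linarith [ht₁r e]).trans
          (add_le_add_left (hCg i t ht0) _))
    (fun i t => by
      rcases lt_or_ge t 0 with ht0 | ht0
      · rw [layer_of_neg ht0]
      · have : nearCompl (U i) (KC i \ KC i) (c * Real.exp (-t)) = ∅ := by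
          simp [nearCompl]
        rw [layer_of_nonneg ht0, this, coveringNumber_empty, Nat.cast_zero, mul_zero])
    (w := w) hw
    (fun i t => by
      rcases le_or_gt t t₁ with ht | ht
      · exact le_add_of_le_of_nonneg (hearly i ∅ t ht) (layer_nonneg _ _ _ _ _ _ _)
      · have ht0 : 0 ≤ t := ht₁0.trans ht.le
        refine le_add_of_nonneg_of_le (hg t) ?_
        rw [layer_of_nonneg ht0, layer_of_nonneg ht0]
        refine mul_le_mul_of_nonneg_left (Nat.cast_le.2 ?_) (Real.exp_pos _).le
        refine coveringNumber_mono
          ((hKC.1 i).isBounded.subset ((nearCompl_subset _ _ _).trans sdiff_subset)) ?_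
          (Real.exp_pos _) le_rfl
        rintro y ⟨hy, z, hz, hyz⟩
        refine ⟨⟨hy.1, fun hyw => ?_⟩, z, hz, hyz⟩
        exact (lt_irrefl _) (((hdeep i y hyw z hz).trans hyz).trans_lt (ht₁δ i t ht)))
  refine summable_of_sum_range_le (c := R * h i) (fun k => layer_nonneg _ _ _ _ _ _ _) fun N => ?_
  rcases N with _ | N
  · simpa using hR i 0 0
  · refine le_of_eq_of_le ?_ (hR i N (N + 1))
    rw [← Finset.sum_range_reflect]
    refine Finset.sum_congr rfl fun k hk => ?_
    have hk' : k ≤ N := Nat.lt_succ_iff.1 (Finset.mem_range.1 hk)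
    rw [Nat.add_sub_cancel, Nat.cast_sub hk']

end MWGraph

namespace MWGraph

variable {d : ℕ} {V E : Type} [Fintype V] [Fintype E] (G : MWGraph d V E)
  {C KC U : V → Set (Pt d)}

lemma isBounded_cell (hKC : G.IsInhomAttractor C KC) (e : E) :
    Bornology.IsBounded (G.S e '' KC (G.term e)) :=
  similarity_isBounded_image (G.r_pos e) (G.S_sim e) (hKC.1 _).isBounded

variable [DecidableEq V]

lemma inhomAttractor_eq (hKC : G.IsInhomAttractor C KC) (i : V) :
    KC i = (⋃ e ∈ Finset.univ.filter (fun e => G.init e = i), G.S e '' KC (G.term e)) ∪ C i := by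
  have := hKC.2.2 i
  simpa using this

lemma coveringNumber_le_sum_cells (hC : G.IsCondensation C) (hKC : G.IsInhomAttractor C KC)
    (i : V) {r : ℝ} (hr : 0 < r) :
    coveringNumber (KC i) r ≤
      ∑ e with G.init e = i, coveringNumber (G.S e '' KC (G.term e)) r +
        coveringNumber (C i) r := by
  have hbd := (Bornology.isBounded_biUnion_finset
    (Finset.univ.filter (fun e => G.init e = i))).2 fun e _ => G.isBounded_cell hKC e
  calc coveringNumber (KC i) r = _ := by rw [G.inhomAttractor_eq hKC i]
    _ ≤ _ := (coveringNumber_union_le hbd (hC i).1.isBounded hr).trans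
      (Nat.add_le_add_right (coveringNumber_biUnion_le _ _ (fun e _ => G.isBounded_cell hKC e) hr) _)

lemma sum_cells_le (hC : G.IsCondensation C) (hKC : G.IsInhomAttractor C KC)
    (hU : G.IsOSCWith U) (hKU : ∀ i, KC i ⊆ closure (U i)) (i : V) {r : ℝ} (hr : 0 < r) :
    ∑ e with G.init e = i, coveringNumber (G.S e '' KC (G.term e)) r ≤
      coveringNumber (KC i) r + Fintype.card E * (coveringNumber (C i) r +
        ∑ e with G.init e = i,
          coveringNumber (nearCompl (U (G.term e)) (KC (G.term e)) (2 * r / G.r e)) (r / G.r e)) := by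
  let F : Finset E := Finset.univ.filter (fun e => G.init e = i)
  let Y : E → Set (Pt d) := fun e =>
    G.S e '' nearCompl (U (G.term e)) (KC (G.term e)) (2 * r / G.r e)
  have hF : ∀ e, e ∈ F ↔ G.init e = i := fun e => by simp [F]
  have hYb : ∀ e, Bornology.IsBounded (Y e) := fun e =>
    (G.isBounded_cell hKC e).subset (image_mono (nearCompl_subset _ _ _))
  have hUb : Bornology.IsBounded (⋃ e ∈ F, Y e) :=
    (Bornology.isBounded_biUnion_finset F).2 fun e _ => hYb e
  have hAK : ∀ e ∈ F, G.S e '' KC (G.term e) ⊆ KC i := fun e he => by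
    rw [G.inhomAttractor_eq hKC i]
    exact subset_union_of_subset_left
      (subset_biUnion_of_mem (u := fun e => G.S e '' KC (G.term e)) he) _
  have hmain := sum_coveringNumber_le F (fun e => G.S e '' KC (G.term e)) (K := KC i)
    (D := C i ∪ ⋃ e ∈ F, Y e) (hKC.1 i).isBounded ((hC i).1.isBounded.union hUb) hr hAK ?_
  · refine hmain.trans (Nat.add_le_add_left (Nat.mul_le_mul (Finset.card_le_univ F) ?_) _)
    refine (coveringNumber_union_le (hC i).1.isBounded hUb hr).trans (Nat.add_le_add_left ?_ _)
    refine (coveringNumber_biUnion_le F Y (fun e _ => hYb e) hr).trans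
      (Finset.sum_le_sum fun e _ => le_of_eq ?_)
    have h := coveringNumber_similarity_image (G.r_pos e) (G.S_sim e)
      (nearCompl (U (G.term e)) (KC (G.term e)) (2 * r / G.r e)) (r / G.r e)
    rwa [mul_div_cancel₀ _ (G.r_pos e).ne'] at h
  · rintro p e he e' he' hne ⟨x, hxe, hxp⟩ ⟨x', hxe', hxp'⟩ y ⟨hyK, hyp⟩
    rw [G.inhomAttractor_eq hKC i] at hyK
    rcases hyK with hy | hy
    · refine Or.inr ?_
      obtain ⟨e₁, he₁, y', hy', rfl⟩ := mem_iUnion₂.1 hy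
      refine mem_iUnion₂.2 ⟨e₁, he₁, y', ?_, rfl⟩
      obtain ⟨e₂, he₂, hne₂, x₂, hx₂, hx₂p⟩ : ∃ e₂ ∈ F, e₁ ≠ e₂ ∧ ∃ x₂ ∈ KC (G.term e₂),
          G.S e₂ x₂ ∈ closedBall p r := by
        by_cases h : e₁ = e
        · obtain ⟨x₂, hx₂, rfl⟩ := hxe'
          exact ⟨e', he', h ▸ hne, x₂, hx₂, hxp'⟩
        · obtain ⟨x₂, hx₂, rfl⟩ := hxe
          exact ⟨e, he, h, x₂, hx₂, hxp⟩
      refine G.mem_nearCompl_of_dist_le hU hKU (((hF _).1 he₁).trans ((hF _).1 he₂).symm) hne₂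
        hy' hx₂ ?_
      have h1 := dist_triangle_right (G.S e₁ y') (G.S e₂ x₂) p
      have h2 := mem_closedBall.1 hyp
      have h3 := mem_closedBall.1 hx₂p
      linarith
    · exact Or.inl hy

/-- Bound, uniform over `[k, k + 1]`, of the error in the additivity of covering numbers. -/
lemma exp_mul_abs_cells_sub_le (hC : G.IsCondensation C) (hKC : G.IsInhomAttractor C KC)
    (hU : G.IsOSCWith U) (hKU : ∀ i, KC i ⊆ closure (U i)) {s : ℝ} (hs : 0 ≤ s) {a : ℝ}
    (ha : 0 < a) (har : ∀ e, a ≤ G.r e) (i : V) (k : ℕ) {t : ℝ}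
    (ht : t ∈ Set.Icc (k : ℝ) (k + 1)) :
    Real.exp (-s * t) *
      |∑ e with G.init e = i, (coveringNumber (G.S e '' KC (G.term e)) (Real.exp (-t)) : ℝ)
        - (coveringNumber (KC i) (Real.exp (-t)) : ℝ)| ≤
      (1 + Fintype.card E) *
        (Real.exp (-s * k) * (coveringNumber (C i) (Real.exp (-((k : ℝ) + 1))) : ℝ)) +
      Fintype.card E * ∑ e with G.init e = i,
        Real.exp s * layer KC U s (2 * Real.exp 1 / a) (G.term e) ∅ ((k + 1 : ℕ) : ℝ) := by
  have hr : 0 < Real.exp (-t) := Real.exp_pos _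
  set n : ℝ := (coveringNumber (C i) (Real.exp (-((k : ℝ) + 1))) : ℝ) with hn
  set y : E → ℝ := fun e => (coveringNumber (nearCompl (U (G.term e)) (KC (G.term e))
    (2 * Real.exp 1 / a * Real.exp (-((k : ℝ) + 1)))) (Real.exp (-((k : ℝ) + 1))) : ℝ) with hy
  have hn0 : 0 ≤ n := Nat.cast_nonneg _
  have hy0 : 0 ≤ ∑ e with G.init e = i, y e := Finset.sum_nonneg fun _ _ => Nat.cast_nonneg _
  have hCn : (coveringNumber (C i) (Real.exp (-t)) : ℝ) ≤ n :=
    monotone_coveringNumber_exp_neg (hC i).1.isBounded ht.2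
  have hlay : ∀ e, (coveringNumber (nearCompl (U (G.term e)) (KC (G.term e))
      (2 * Real.exp (-t) / G.r e)) (Real.exp (-t) / G.r e) : ℝ) ≤ y e := fun e => by
    have hexp : Real.exp (-((k : ℝ) + 1)) ≤ Real.exp (-t) :=
      Real.exp_le_exp.2 (by linarith [ht.2])
    refine Nat.cast_le.2 (coveringNumber_mono
      ((hKC.1 _).isBounded.subset (nearCompl_subset _ _ _)) (nearCompl_mono subset_rfl ?_)
      (Real.exp_pos _) (hexp.trans (le_div_self hr.le (G.r_pos e) (G.r_lt_one e).le)))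
    have h1 : Real.exp (-t) ≤ Real.exp 1 * Real.exp (-((k : ℝ) + 1)) := by
      rw [← Real.exp_add]
      exact Real.exp_le_exp.2 (by linarith [ht.1])
    calc 2 * Real.exp (-t) / G.r e ≤ 2 * (Real.exp 1 * Real.exp (-((k : ℝ) + 1))) / a :=
          div_le_div₀ (by positivity) (by linarith) ha (har e)
      _ = _ := by ring
  have hup : (∑ e with G.init e = i,
      (coveringNumber (G.S e '' KC (G.term e)) (Real.exp (-t)) : ℝ)) ≤
      (coveringNumber (KC i) (Real.exp (-t)) : ℝ) +
        Fintype.card E * (n + ∑ e with G.init e = i, y e) := by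
    have h1 := Nat.cast_le (α := ℝ).2 (G.sum_cells_le hC hKC hU hKU i hr)
    push_cast at h1
    refine h1.trans (by gcongr with e; exact hlay e)
  have hlow : (coveringNumber (KC i) (Real.exp (-t)) : ℝ) ≤ (∑ e with G.init e = i,
      (coveringNumber (G.S e '' KC (G.term e)) (Real.exp (-t)) : ℝ)) + n := by
    have h1 := Nat.cast_le (α := ℝ).2 (G.coveringNumber_le_sum_cells hC hKC i hr)
    push_cast at h1
    linarith
  have hcard : (0 : ℝ) ≤ Fintype.card E := Nat.cast_nonneg _
  have habs : |∑ e with G.init e = i,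
      (coveringNumber (G.S e '' KC (G.term e)) (Real.exp (-t)) : ℝ)
        - (coveringNumber (KC i) (Real.exp (-t)) : ℝ)| ≤
      (1 + Fintype.card E) * n + Fintype.card E * ∑ e with G.init e = i, y e := by
    have h1 := mul_nonneg hcard hn0
    have h2 := mul_nonneg hcard hy0
    rw [abs_le]
    constructor <;> linarith
  have hexp : Real.exp (-s * t) ≤ Real.exp (-s * k) :=
    Real.exp_le_exp.2 (by nlinarith [ht.1])
  refine (mul_le_mul hexp habs (abs_nonneg _) (Real.exp_pos _).le).trans (le_of_eq ?_)
  have hterm : ∀ e, Real.exp s * layer KC U s (2 * Real.exp 1 / a) (G.term e) ∅ ((k + 1 : ℕ) : ℝ)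
      = Real.exp (-s * k) * y e := fun e => by
    rw [layer_of_nonneg (Nat.cast_nonneg _), sdiff_empty, ← mul_assoc, ← Real.exp_add, hy]
    push_cast
    congr 2
    ring
  simp_rw [hterm]
  rw [← Finset.mul_sum]
  ring

end MWGraph

theorem stmt9 {d : ℕ} {V E : Type} [Fintype V] [Fintype E] [DecidableEq V]
    (G : MWGraph d V E) (hSC : G.StronglyConnected)
    (C K KC U : V → Set (Pt d))
    (hC : G.IsCondensation C) (hK : G.IsAttractor K) (hKC : G.IsInhomAttractor C KC)
    (hU : G.IsOSCWith U) (hUK : ∀ i, (U i ∩ K i).Nonempty)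
    (hCU : ∀ i, C i ⊆ closure (U i))
    (s0 : ℝ) (hs0 : IsS0 G s0)
    (hint : ∀ i : V, ∫⁻ t in Set.Ioi (0 : ℝ),
      ENNReal.ofReal (Real.exp (-s0 * t) * (coveringNumber (C i) (Real.exp (-t)) : ℝ)) < ⊤)
    (fstar : V → ℝ → ℝ)
    (hfstar : ∀ (j : V) (t : ℝ), fstar j t =
      Real.exp (-s0 * t) * (coveringNumber (KC j) (Real.exp (-t)) : ℝ))
    (Lstar : V → ℝ → ℝ)
    (hLstar : ∀ (i : V) (t : ℝ), Lstar i t =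
      (∑ e : E, if G.init e = i then
        ((coveringNumber (G.S e '' KC (G.term e)) (Real.exp (-t)) : ℝ)) else 0)
      - (coveringNumber (KC i) (Real.exp (-t)) : ℝ))
    (f L : V → ℝ → ℝ)
    (hf : ∀ (i : V) (t : ℝ), f i t = if 0 ≤ t then fstar i t else 0)
    (hL : ∀ (i : V) (t : ℝ), L i t = if 0 ≤ t then
        (-(Lstar i t) * Real.exp (-s0 * t) +
          ∑ e : E, if G.init e = i ∧ t < Real.log (1 / G.r e) then
            G.r e ^ s0 * fstar (G.term e) (t + Real.log (G.r e)) else 0)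
      else 0) :
    (∀ (i : V) (t : ℝ), f i t =
      (∑ e : E, if G.init e = i then
        G.r e ^ s0 * f (G.term e) (t + Real.log (G.r e)) else 0) + L i t) ∧
    (∀ i : V, (∀ a b : ℝ, IntervalIntegrable (L i) MeasureTheory.volume a b) ∧
      Summable (fun k : ℕ => sSup {x : ℝ | ∃ t ∈ Set.Icc (k : ℝ) (k + 1), x = |L i t|})) := by
  have hlog : ∀ e, Real.log (1 / G.r e) = -Real.log (G.r e) := fun e => by
    rw [one_div, Real.log_inv]
  have hrenewal : ∀ (i : V) (t : ℝ), f i t =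
      (∑ e : E, if G.init e = i then
        G.r e ^ s0 * f (G.term e) (t + Real.log (G.r e)) else 0) + L i t := by
    intro i t
    rw [hL, hf]
    split_ifs with ht
    · rw [hLstar, neg_sub, sub_mul, Finset.sum_mul, hfstar, mul_comm (Real.exp _)]
      have hsum : (∑ e : E, if G.init e = i then
            G.r e ^ s0 * f (G.term e) (t + Real.log (G.r e)) else 0) +
          (∑ e : E, if G.init e = i ∧ t < Real.log (1 / G.r e) then
            G.r e ^ s0 * fstar (G.term e) (t + Real.log (G.r e)) else 0) =
          ∑ e : E, (if G.init e = i then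
            ((coveringNumber (G.S e '' KC (G.term e)) (Real.exp (-t)) : ℝ)) else 0) *
              Real.exp (-s0 * t) := by
        rw [← Finset.sum_add_distrib]
        refine Finset.sum_congr rfl fun e _ => ?_
        by_cases he : G.init e = i
        · have hcell : (coveringNumber (G.S e '' KC (G.term e)) (Real.exp (-t)) : ℝ) *
              Real.exp (-s0 * t) =
              G.r e ^ s0 * fstar (G.term e) (t + Real.log (G.r e)) := by
            rw [hfstar, coveringNumber_similarity_image_exp (G.r_pos e) (G.S_sim e),
              G.exp_eq_rpow_mul_exp_shift e]
            ring
          simp only [he, true_and, if_true, hcell, hf, hlog]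
          by_cases hte : t < -Real.log (G.r e)
          · rw [if_pos hte, if_neg (by linarith), mul_zero, zero_add]
          · rw [if_neg hte, if_pos (by linarith), add_zero]
        · simp [he]
      linarith
    · rw [add_zero]
      refine (Finset.sum_eq_zero fun e _ => ?_).symm
      have := Real.log_neg (G.r_pos e) (G.r_lt_one e)
      have hneg : ¬ 0 ≤ t + Real.log (G.r e) := by linarith [not_le.1 ht]
      simp [hf, hneg]
  refine ⟨hrenewal, fun i => ⟨fun a b => ?_, ?_⟩⟩
  · have hfint : ∀ j a b, IntervalIntegrable (f j) volume a b := by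
      intro j a b
      have h1 : IntervalIntegrable
          (fun t => Real.exp (-s0 * t) * (coveringNumber (KC j) (Real.exp (-t)) : ℝ))
          volume a b :=
        (monotone_coveringNumber_exp_neg (hKC.1 j).isBounded).intervalIntegrable.continuousOn_mul
          (by fun_prop)
      have h2 : f j = (Set.Ici 0).indicator
          (fun t => Real.exp (-s0 * t) * (coveringNumber (KC j) (Real.exp (-t)) : ℝ)) := by
        funext t
        rw [hf, hfstar, Set.indicator_apply]
        rfl
      rw [h2]
      exact ⟨h1.1.indicator measurableSet_Ici, h1.2.indicator measurableSet_Ici⟩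
    have hLeq : L i = fun t => f i t - ∑ e : E, if G.init e = i then
        G.r e ^ s0 * f (G.term e) (t + Real.log (G.r e)) else 0 := by
      funext t
      linarith [hrenewal i t]
    rw [hLeq]
    refine (hfint i a b).sub ?_
    have := IntervalIntegrable.sum (μ := volume) (a := a) (b := b) Finset.univ
      (f := fun (e : E) t => if G.init e = i then
        G.r e ^ s0 * f (G.term e) (t + Real.log (G.r e)) else 0) fun e _ => by
      by_cases he : G.init e = i
      · simp only [he, if_true]
        refine IntervalIntegrable.const_mul ?_ _
        simpa using (hfint (G.term e) (a + Real.log (G.r e)) (b + Real.log (G.r e))).comp_add_right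
          (Real.log (G.r e))
      · simp [he]
    convert! this using 1
    funext t
    simp
  · obtain ⟨a, b, ha, hb0, hb1, hab⟩ := G.exists_ratio_bounds
    have hKU := G.inhomAttractor_subset_closure hKC hU hCU
    have hCsum := fun j =>
      summable_coveringNumber_of_lintegral (hC j).1.isBounded hs0.1 (hint j)
    have hlay := G.summable_layer hSC hC hK hKC hU hUK hs0 hCsum (2 * Real.exp 1 / a)
    obtain ⟨k₀, hk₀⟩ := exists_nat_ge (-Real.log a)
    have hbound : Summable fun k : ℕ => (1 + Fintype.card E) *
        (Real.exp (-s0 * k) * (coveringNumber (C i) (Real.exp (-((k : ℝ) + 1))) : ℝ)) +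
        Fintype.card E * ∑ e with G.init e = i, Real.exp s0 *
          MWGraph.layer KC U s0 (2 * Real.exp 1 / a) (G.term e) ∅ ((k + 1 : ℕ) : ℝ) := by
      refine ((hCsum i).mul_left _).add (Summable.mul_left _ (summable_sum fun e _ => ?_))
      exact ((summable_nat_add_iff 1).2 (hlay (G.term e))).mul_left _
    rw [← summable_nat_add_iff k₀]
    refine Summable.of_nonneg_of_le (fun k => Real.sSup_nonneg ?_) (fun k => csSup_le ?_ ?_)
      ((summable_nat_add_iff k₀).2 hbound)
    · rintro x ⟨t, -, rfl⟩
      exact abs_nonneg _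
    · exact ⟨_, _, Set.left_mem_Icc.2 (by linarith), rfl⟩
    · rintro x ⟨t, ht, rfl⟩
      refine le_of_eq_of_le ?_ (G.exp_mul_abs_cells_sub_le hC hKC hU hKU hs0.1 ha
        (fun e => (hab e).1) i (k + k₀) ht)
      have hkt : (k₀ : ℝ) ≤ t := by
        have h1 := ht.1
        push_cast at h1
        have h2 : (0 : ℝ) ≤ k := k.cast_nonneg
        linarith
      have hzero : (∑ e : E, if G.init e = i ∧ t < Real.log (1 / G.r e) then
          G.r e ^ s0 * fstar (G.term e) (t + Real.log (G.r e)) else 0) = 0 := by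
        refine Finset.sum_eq_zero fun e _ => if_neg fun h => ?_
        have h1 := h.2
        rw [hlog] at h1
        linarith [Real.log_le_log ha (hab e).1]
      rw [hL, if_pos ((Nat.cast_nonneg k₀).trans hkt), hzero, add_zero, abs_mul, abs_neg,
        abs_of_pos (Real.exp_pos _), mul_comm, hLstar, Finset.sum_filter]
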